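/- There is an absolute constant C such that every weighted undirected graph G with positive edge weights on n vertices admits a (β, ε)-hopset H of size at most C·n, for every real ε > 0, where β = 2(r+1)^k with k = ⌈log₂ log₂ n⌉ and r = ⌈4k / ln(1+ε)⌉. -/

import Mathlib

open scoped ENNReal
open Classical

/-- Hop-bounded distance: minimum total weight of a walk with at most `β` edges. -/
noncomputable def hopDist {V : Type*} (w : V → V → ℝ≥0∞) : ℕ → V → V → ℝ≥0∞
  | 0, u, v => if u = v then 0 else ⊤
  | β + 1, u, v => hopDist w β u v ⊓ ⨅ x, w u x + hopDist w β x v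

/-- Shortest-path distance (infimum over all hop bounds). -/
noncomputable def gdist {V : Type*} (w : V → V → ℝ≥0∞) (u v : V) : ℝ≥0∞ :=
  ⨅ β, hopDist w β u v

/-- The graph `G ∪ H`: add each edge of `H` with weight equal to the `G`-distance
between its endpoints. -/
noncomputable def addShortcuts {V : Type*} (w : V → V → ℝ≥0∞) (H : Set (V × V)) :
    V → V → ℝ≥0∞ :=
  fun u v => w u v ⊓ (if (u, v) ∈ H ∨ (v, u) ∈ H then gdist w u v else ⊤)

/-- `H` is a `(β, ε)`-hopset for the graph with weight function `w`. -/
def IsHopset {V : Type*} (w : V → V → ℝ≥0∞) (H : Set (V × V)) (β : ℕ) (ε : ℝ) : Prop :=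
  ∀ u v : V,
    gdist w u v ≤ hopDist (addShortcuts w H) β u v ∧
    hopDist (addShortcuts w H) β u v ≤ ENNReal.ofReal (1 + ε) * gdist w u v

/-!
Thorup–Zwick levels `V = A 0, A 1, …, A (k + 1) = ∅` with `A i` of size about
`n / 2 ^ (2 ^ i + i)`: each point of `A i` is joined to its nearest point of `A (i + 1)` and to
all points of `A i` that are closer still. A uniformly random `m`-subset of `A i` leaves at most
`|A i| ^ 2 / (m + 1)` edges of the second kind on average, so level `i` costs `O(n / 2 ^ i)`
edges and the total is `O(n)`.

For hops and stretch, suppose that walks with `h` hops and stretch `S` either reach their target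
or end in `A i` at the same cost. Cut a shortest path from `u` to `v` into `r` pieces of length
at most `L = dist(u, v) / r` and march along it from both ends. Either the marches meet, or they
get stuck at `p` and `q`, each of which is within `S L` of `A i`; then a single edge of level
`i` completes a detour from `p` to `q`, or else into `A (i + 1)`, of additional length at most
`4 S L`. So `i + 1` needs `(r + 1) h + r` hops and has stretch `S (1 + 4 / r)`. As `A (k + 1)`
is empty, after `k` rounds every target is reached, with stretch at most
`(1 + 4 / r) ^ k ≤ exp (4 k / r) ≤ 1 + ε`.
-/

section HopDist

variable {V : Type*}

theorem hopDist_zero_self (w : V → V → ℝ≥0∞) (u : V) : hopDist w 0 u u = 0 :=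
  if_pos rfl

theorem hopDist_zero_of_ne (w : V → V → ℝ≥0∞) {u v : V} (h : u ≠ v) : hopDist w 0 u v = ⊤ :=
  if_neg h

theorem hopDist_antitone (w : V → V → ℝ≥0∞) (u v : V) : Antitone fun β => hopDist w β u v :=
  antitone_nat_of_succ_le fun _ => inf_le_left

theorem hopDist_succ_le_add (w : V → V → ℝ≥0∞) (β : ℕ) (u x v : V) :
    hopDist w (β + 1) u v ≤ w u x + hopDist w β x v :=
  inf_le_right.trans (iInf_le _ x)

theorem hopDist_one_le (w : V → V → ℝ≥0∞) (u v : V) : hopDist w 1 u v ≤ w u v := by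
  simpa only [hopDist_zero_self, add_zero] using hopDist_succ_le_add w 0 u v v

theorem add_hopDist_succ (w : V → V → ℝ≥0∞) (c : ℝ≥0∞) (β : ℕ) (u v : V) :
    c + hopDist w (β + 1) u v =
      (c + hopDist w β u v) ⊓ ⨅ x, c + (w u x + hopDist w β x v) := by
  rw [hopDist, ← min_add_add_left, ENNReal.add_iInf]

theorem hopDist_add_le (w : V → V → ℝ≥0∞) (a b : ℕ) (u x v : V) :
    hopDist w (a + b) u v ≤ hopDist w a u x + hopDist w b x v := by
  induction a generalizing u with
  | zero =>
    rcases eq_or_ne u x with rfl | h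
    · rw [zero_add, hopDist_zero_self, zero_add]
    · rw [hopDist_zero_of_ne w h, top_add]
      exact le_top
  | succ a ih =>
    rw [add_comm (hopDist _ _ _ _), add_hopDist_succ, add_right_comm]
    refine le_inf ?_ (le_iInf fun y => ?_)
    · rw [add_comm (hopDist _ _ _ _)]
      exact (hopDist_antitone w u v (Nat.le_succ _)).trans (ih u)
    · rw [add_left_comm, add_comm (hopDist w b x v)]
      exact (hopDist_succ_le_add w (a + b) u y v).trans (by gcongr; exact ih y)

theorem hopDist_comm {w : V → V → ℝ≥0∞} (hw : ∀ u v, w u v = w v u) (β : ℕ) (u v : V) :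
    hopDist w β u v = hopDist w β v u := by
  suffices h : ∀ u v, hopDist w β v u ≤ hopDist w β u v from le_antisymm (h v u) (h u v)
  induction β with
  | zero => intro u v; simp only [hopDist, eq_comm, le_refl]
  | succ β ih =>
    refine fun u v =>
      le_inf ((hopDist_antitone w v u β.le_succ).trans (ih u v)) (le_iInf fun y => ?_)
    calc hopDist w (β + 1) v u ≤ hopDist w β v y + hopDist w 1 y u := hopDist_add_le w β 1 v y u
      _ ≤ hopDist w β y v + w u y := by
        gcongr
        · exact ih y v
        · exact hw u y ▸ hopDist_one_le w y u
      _ = w u y + hopDist w β y v := add_comm _ _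

theorem gdist_le_hopDist (w : V → V → ℝ≥0∞) (β : ℕ) (u v : V) : gdist w u v ≤ hopDist w β u v :=
  iInf_le _ β

theorem gdist_self (w : V → V → ℝ≥0∞) (u : V) : gdist w u u = 0 :=
  le_bot_iff.1 ((gdist_le_hopDist w 0 u u).trans_eq (hopDist_zero_self w u))

theorem gdist_le_weight (w : V → V → ℝ≥0∞) (u v : V) : gdist w u v ≤ w u v :=
  (gdist_le_hopDist w 1 u v).trans (hopDist_one_le w u v)

theorem gdist_triangle (w : V → V → ℝ≥0∞) (u x v : V) :
    gdist w u v ≤ gdist w u x + gdist w x v :=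
  ENNReal.le_iInf_add_iInf fun a b => (gdist_le_hopDist w (a + b) u v).trans
    (hopDist_add_le w a b u x v)

theorem gdist_comm {w : V → V → ℝ≥0∞} (hw : ∀ u v, w u v = w v u) (u v : V) :
    gdist w u v = gdist w v u :=
  iInf_congr fun β => hopDist_comm hw β u v

-- The witness minimises the length of a walk from `z` to `v` through an edge that leaves the ball
-- of radius `L` around `z`; every walk from that ball to `v` uses such an edge.
theorem exists_crossing_edge [Finite V] (w : V → V → ℝ≥0∞) {z v : V} {L : ℝ≥0∞}
    (hL : L < gdist w z v) :
    ∃ y z', gdist w z y ≤ L ∧ L < gdist w z z' ∧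
      gdist w z y + w y z' + gdist w z' v ≤ gdist w z v := by
  obtain ⟨⟨y₀, z₀⟩, ⟨hy₀, hz₀⟩, hmin⟩ := Set.exists_min_image
    {e : V × V | gdist w z e.1 ≤ L ∧ L < gdist w z e.2}
    (fun e => gdist w z e.1 + w e.1 e.2 + gdist w e.2 v) (Set.toFinite _)
    ⟨(z, v), by simp only [gdist_self, zero_le], hL⟩
  refine ⟨y₀, z₀, hy₀, hz₀, le_iInf fun N => ?_⟩
  suffices h : ∀ y, gdist w z y ≤ L → gdist w z y₀ + w y₀ z₀ + gdist w z₀ v ≤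
      gdist w z y + hopDist w N y v by
    simpa only [gdist_self, zero_add] using h z (by simp only [gdist_self, zero_le])
  induction N with
  | zero =>
    intro y hy
    have hyv : y ≠ v := fun h => (h ▸ hy).not_gt hL
    rw [hopDist_zero_of_ne w hyv, add_top]
    exact le_top
  | succ N ih =>
    intro y hy
    rw [add_hopDist_succ]
    refine le_inf (ih y hy) (le_iInf fun x => ?_)
    rw [← add_assoc]
    rcases le_or_gt (gdist w z x) L with hx | hx
    · refine (ih x hx).trans ?_
      gcongr
      exact (gdist_triangle w z y x).trans (by gcongr; exact gdist_le_weight w y x)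
    · exact (hmin (y, x) ⟨hy, hx⟩).trans (by gcongr; exact gdist_le_hopDist w N x v)

end HopDist

section AddShortcuts

variable {V : Type*} {w : V → V → ℝ≥0∞}

theorem addShortcuts_le_weight (w : V → V → ℝ≥0∞) (H : Set (V × V)) (u v : V) :
    addShortcuts w H u v ≤ w u v :=
  inf_le_left

theorem addShortcuts_le_gdist {H : Set (V × V)} {u v : V} (h : (u, v) ∈ H) :
    addShortcuts w H u v ≤ gdist w u v :=
  inf_le_right.trans_eq (if_pos (Or.inl h))

theorem gdist_le_addShortcuts (w : V → V → ℝ≥0∞) (H : Set (V × V)) (u v : V) :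
    gdist w u v ≤ addShortcuts w H u v := by
  refine le_inf (gdist_le_weight w u v) ?_
  split_ifs
  exacts [le_rfl, le_top]

theorem addShortcuts_comm (hw : ∀ u v, w u v = w v u) (H : Set (V × V)) (u v : V) :
    addShortcuts w H u v = addShortcuts w H v u := by
  simp only [addShortcuts, hw u v, gdist_comm hw u v, or_comm]

theorem gdist_le_hopDist_addShortcuts (w : V → V → ℝ≥0∞) (H : Set (V × V)) (β : ℕ) (u v : V) :
    gdist w u v ≤ hopDist (addShortcuts w H) β u v := by
  induction β generalizing u with
  | zero =>
    rcases eq_or_ne u v with rfl | h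
    · exact (gdist_self w u).trans_le zero_le
    · exact le_top.trans_eq (hopDist_zero_of_ne _ h).symm
  | succ β ih =>
    exact le_inf (ih u) (le_iInf fun y => (gdist_triangle w u y v).trans
      (add_le_add (gdist_le_addShortcuts w H u y) (ih y)))

end AddShortcuts

section Bunch

variable {V β : Type*} [LinearOrder β]

/-- The Thorup–Zwick bunch of `x` in `A` relative to `S`: the points of `A` which are strictly
closer to `x` than every point of `S`. It is all of `A` when `S` is empty. -/
noncomputable def bunch (d : V → V → β) (A S : Finset V) (x : V) : Finset V :=
  {y ∈ A | ∀ s ∈ S, d x y < d x s}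

theorem mem_bunch {d : V → V → β} {A S : Finset V} {x y : V} :
    y ∈ bunch d A S x ↔ y ∈ A ∧ ∀ s ∈ S, d x y < d x s :=
  Finset.mem_filter

-- `y` is recovered from `insert y S` as its unique nearest point to `x`.
theorem sum_card_bunch_powersetCard_le (d : V → V → β) (A : Finset V) (m : ℕ) (x : V) :
    ∑ S ∈ A.powersetCard m, (bunch d A S x).card ≤ A.card.choose (m + 1) := by
  rw [← Finset.card_sigma, ← Finset.card_powersetCard]
  have not_mem {S : Finset V} {y : V} (hy : y ∈ bunch d A S x) : y ∉ S := fun h =>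
    ((mem_bunch.1 hy).2 y h).false
  refine Finset.card_le_card_of_injOn (fun p => insert p.2 p.1) ?_ ?_
  · rintro ⟨S, y⟩ hp
    obtain ⟨hS, hy⟩ := Finset.mem_sigma.1 hp
    obtain ⟨hSA, rfl⟩ := Finset.mem_powersetCard.1 hS
    exact Finset.mem_powersetCard.2 ⟨Finset.insert_subset (mem_bunch.1 hy).1 hSA,
      Finset.card_insert_of_notMem (not_mem hy)⟩
  · rintro ⟨S, y⟩ hp ⟨T, z⟩ hq (hST : insert y S = insert z T)
    have hy : y ∈ bunch d A S x := (Finset.mem_sigma.1 hp).2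
    have hz : z ∈ bunch d A T x := (Finset.mem_sigma.1 hq).2
    obtain rfl : y = z := by
      by_contra hyz
      have hyT : y ∈ T := Finset.mem_of_mem_insert_of_ne (hST ▸ Finset.mem_insert_self y S) hyz
      have hzS : z ∈ S :=
        Finset.mem_of_mem_insert_of_ne (hST ▸ Finset.mem_insert_self z T) (Ne.symm hyz)
      exact ((mem_bunch.1 hy).2 z hzS).asymm ((mem_bunch.1 hz).2 y hyT)
    obtain rfl : S = T := by
      rw [← Finset.erase_insert (not_mem hy), hST, Finset.erase_insert (not_mem hz)]
    rfl

theorem exists_sum_card_bunch_mul_le_of_le_card (d : V → V → β) (A : Finset V) {m : ℕ}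
    (hm : m ≤ A.card) :
    ∃ S : Finset V, S.card = m ∧ (∑ x ∈ A, (bunch d A S x).card) * (m + 1) ≤ A.card ^ 2 := by
  have haverage : ∑ S ∈ A.powersetCard m, (∑ x ∈ A, (bunch d A S x).card) * (m + 1) ≤
      ∑ _S ∈ A.powersetCard m, A.card ^ 2 := by
    calc ∑ S ∈ A.powersetCard m, (∑ x ∈ A, (bunch d A S x).card) * (m + 1)
        = (∑ x ∈ A, ∑ S ∈ A.powersetCard m, (bunch d A S x).card) * (m + 1) := by
          rw [← Finset.sum_mul, Finset.sum_comm]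
      _ ≤ A.card * A.card.choose (m + 1) * (m + 1) := by
          gcongr
          exact Finset.sum_le_card_nsmul _ _ _ fun x _ => sum_card_bunch_powersetCard_le d A m x
      _ = A.card * (A.card.choose m * (A.card - m)) := by
          rw [mul_assoc, Nat.choose_succ_right_eq]
      _ ≤ A.card * (A.card.choose m * A.card) := by
          gcongr
          exact Nat.sub_le _ _
      _ = ∑ _S ∈ A.powersetCard m, A.card ^ 2 := by
          rw [Finset.sum_const, Finset.card_powersetCard, smul_eq_mul]
          ring
  obtain ⟨S, hS, hle⟩ :=
    Finset.exists_le_of_sum_le (Finset.powersetCard_nonempty.2 hm) haverage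
  exact ⟨S, (Finset.mem_powersetCard.1 hS).2, hle⟩

theorem exists_sum_card_bunch_mul_le (d : V → V → β) (A : Finset V) (m : ℕ) :
    ∃ S : Finset V, S.card ≤ m ∧
      (∑ x ∈ A, (bunch d A S x).card) * (m + 1) ≤ A.card ^ 2 := by
  rcases le_total m A.card with hm | hm
  · obtain ⟨S, hS, hle⟩ := exists_sum_card_bunch_mul_le_of_le_card d A hm
    exact ⟨S, hS.le, hle⟩
  · have hempty (x : V) : bunch d A A x = ∅ :=
      Finset.filter_eq_empty_iff.2 fun y hy h => (h y hy).false
    refine ⟨A, hm, ?_⟩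
    simp only [hempty, Finset.card_empty, Finset.sum_const_zero, zero_mul, zero_le]

end Bunch

section Hierarchy

variable {V β : Type*} [LinearOrder β]

-- With `q = 2 ^ 2 ^ i` and `p = 2 ^ i`, passing from `i` to `i + 1` replaces `q * p` by
-- `q ^ 2 * (2 * p)`.
theorem mul_le_four_mul_of_mul_succ_le_sq {a b m n p q : ℕ} (ha : a * (q * p) ≤ 2 * n)
    (hb : b * (m + 1) ≤ a ^ 2) (hm : 2 * n < (m + 1) * (q ^ 2 * (2 * p))) : b * p ≤ 4 * n := by
  rcases n.eq_zero_or_pos with rfl | hn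
  · have hqp : q * p ≠ 0 := by
      rintro h
      rcases Nat.mul_eq_zero.1 h with rfl | rfl <;> simp at hm
    obtain rfl : a = 0 := by
      simpa [hqp] using ha
    obtain rfl : b = 0 := by simpa using hb
    simp
  · refine Nat.le_of_mul_le_mul_left ?_ (by positivity : 0 < 2 * n)
    calc 2 * n * (b * p) ≤ (m + 1) * (q ^ 2 * (2 * p)) * (b * p) := by gcongr
      _ = b * (m + 1) * (2 * (q * p) ^ 2) := by ring
      _ ≤ a ^ 2 * (2 * (q * p) ^ 2) := by gcongr
      _ = 2 * (a * (q * p)) ^ 2 := by ring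
      _ ≤ 2 * (2 * n) ^ 2 := by gcongr
      _ = 2 * n * (4 * n) := by ring

theorem exists_hierarchy (d : V → V → β) (X : Finset V) :
    ∃ A : ℕ → Finset V, A 0 = X ∧ ∀ i, (A i).card * (2 ^ 2 ^ i * 2 ^ i) ≤ 2 * X.card ∧
      (∑ x ∈ A i, (bunch d (A i) (A (i + 1)) x).card) * 2 ^ i ≤ 4 * X.card := by
  choose next hcard hbunch using exists_sum_card_bunch_mul_le d
  let size (i : ℕ) : ℕ := 2 * X.card / (2 ^ 2 ^ i * 2 ^ i)
  let A (i : ℕ) : Finset V := Nat.rec X (fun i B => next B (size (i + 1))) i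
  have hA : ∀ i, (A i).card * (2 ^ 2 ^ i * 2 ^ i) ≤ 2 * X.card
    | 0 => by simp [A, mul_comm]
    | i + 1 => (Nat.mul_le_mul_right _ (hcard (A i) _)).trans (Nat.div_mul_le_self _ _)
  refine ⟨A, rfl, fun i => ⟨hA i, ?_⟩⟩
  refine mul_le_four_mul_of_mul_succ_le_sq (hA i) (hbunch (A i) (size (i + 1))) ?_
  rw [← pow_mul, ← pow_succ, ← pow_succ', mul_comm (_ + 1)]
  exact Nat.lt_mul_div_succ _ (by positivity)

theorem eq_zero_of_mul_two_pow_two_pow_le {a n k : ℕ} (hn : n ≤ 2 ^ 2 ^ k)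
    (h : a * (2 ^ 2 ^ (k + 1) * 2 ^ (k + 1)) ≤ 2 * n) : a = 0 := by
  have hlt : 2 * n < 2 ^ 2 ^ (k + 1) * 2 ^ (k + 1) := by
    calc 2 * n ≤ 2 ^ (2 ^ k + 1) := by rw [pow_succ']; gcongr
      _ < 2 ^ (2 ^ (k + 1) + (k + 1)) := by
        have := Nat.one_le_two_pow (n := k)
        exact Nat.pow_lt_pow_right one_lt_two (by omega)
      _ = 2 ^ 2 ^ (k + 1) * 2 ^ (k + 1) := pow_add _ _ _
  by_contra ha
  exact (h.trans_lt hlt).not_ge (Nat.le_mul_of_pos_left _ (Nat.pos_of_ne_zero ha))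

/-- The edges of `H` resolve the level `A` over the next level `B`: any two points of `A` are
joined by `H`, unless the first is joined to a point of `B` that is at least as close. -/
def CoversLevel (d : V → V → β) (H : Set (V × V)) (A B : Set V) : Prop :=
  ∀ x ∈ A, ∀ y ∈ A, (x, y) ∈ H ∨ ∃ p ∈ B, (x, p) ∈ H ∧ d x p ≤ d x y

theorem CoversLevel.mono {d : V → V → β} {H K : Set (V × V)} {A B : Set V}
    (h : CoversLevel d H A B) (hHK : H ⊆ K) : CoversLevel d K A B := fun x hx y hy =>
  (h x hx y hy).imp (@hHK _) fun ⟨p, hp, hxp, hle⟩ => ⟨p, hp, hHK hxp, hle⟩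

theorem exists_coversLevel (d : V → V → β) (A B : Finset V) :
    ∃ E : Finset (V × V), E.card ≤ ∑ x ∈ A, (bunch d A B x).card + A.card ∧
      CoversLevel d (E : Set (V × V)) A B := by
  have hnearest (x : V) : ∃ p, ∀ s ∈ B, p ∈ B ∧ d x p ≤ d x s := by
    rcases B.eq_empty_or_nonempty with rfl | hB
    · exact ⟨x, by simp⟩
    · obtain ⟨p, hp, hmin⟩ := B.exists_min_image (d x) hB
      exact ⟨p, fun s hs => ⟨hp, hmin s hs⟩⟩
  choose p hp using hnearest
  refine ⟨A.biUnion fun x => {x} ×ˢ insert (p x) (bunch d A B x), ?_, fun x hx y hy => ?_⟩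
  · refine Finset.card_biUnion_le.trans ?_
    rw [Finset.card_eq_sum_ones, ← Finset.sum_add_distrib]
    refine Finset.sum_le_sum fun x _ => ?_
    rw [Finset.singleton_product, Finset.card_map]
    exact Finset.card_insert_le _ _
  · have hmem {z : V} (hz : z ∈ insert (p x) (bunch d A B x)) :
        (x, z) ∈ A.biUnion fun x => {x} ×ˢ insert (p x) (bunch d A B x) :=
      Finset.mem_biUnion.2 ⟨x, hx, Finset.mk_mem_product (Finset.mem_singleton_self x) hz⟩
    by_cases hyb : y ∈ bunch d A B x
    · exact Or.inl (hmem (Finset.mem_insert_of_mem hyb))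
    · obtain ⟨s, hs, hsy⟩ : ∃ s ∈ B, d x s ≤ d x y := by
        simpa [mem_bunch, show y ∈ A from hy] using hyb
      obtain ⟨hpB, hps⟩ := hp x s hs
      exact Or.inr ⟨p x, hpB, hmem (Finset.mem_insert_self _ _), hps.trans hsy⟩

theorem exists_hierarchy_coversLevel (d : V → V → β) (X : Finset V) {k : ℕ}
    (hk : X.card ≤ 2 ^ 2 ^ k) :
    ∃ (A : ℕ → Finset V) (H : Finset (V × V)), A 0 = X ∧ A (k + 1) = ∅ ∧
      H.card ≤ 10 * X.card ∧
      ∀ i ≤ k, CoversLevel d (H : Set (V × V)) (A i) (A (i + 1)) := by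
  obtain ⟨A, hA0, hA⟩ := exists_hierarchy d X
  choose E hE hcover using fun i => exists_coversLevel d (A i) (A (i + 1))
  have hEcard (i : ℕ) : (E i).card ≤ 5 * X.card / 2 ^ i := by
    rw [Nat.le_div_iff_mul_le (by positivity)]
    have hAi : (A i).card * 2 ^ i ≤ X.card := by
      refine Nat.le_of_mul_le_mul_left ?_ two_pos
      calc 2 * ((A i).card * 2 ^ i) ≤ 2 ^ 2 ^ i * ((A i).card * 2 ^ i) := by
            gcongr
            exact le_self_pow₀ one_le_two (by positivity)
        _ = (A i).card * (2 ^ 2 ^ i * 2 ^ i) := mul_left_comm _ _ _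
        _ ≤ 2 * X.card := (hA i).1
    calc (E i).card * 2 ^ i
        ≤ (∑ x ∈ A i, (bunch d (A i) (A (i + 1)) x).card + (A i).card) * 2 ^ i := by
          gcongr
          exact hE i
      _ ≤ 5 * X.card := by linarith [(hA i).2]
  refine ⟨A, (Finset.range (k + 1)).biUnion E, hA0, ?_, ?_, fun i hi => ?_⟩
  · exact Finset.card_eq_zero.1 (eq_zero_of_mul_two_pow_two_pow_le hk (hA (k + 1)).1)
  · calc ((Finset.range (k + 1)).biUnion E).card
        ≤ ∑ i ∈ Finset.range (k + 1), 5 * X.card / 2 ^ i :=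
          Finset.card_biUnion_le.trans (Finset.sum_le_sum fun i _ => hEcard i)
      _ ≤ 5 * X.card * 2 / (2 - 1) := Nat.geom_sum_le le_rfl _ _
      _ = 10 * X.card := by omega
  · exact (hcover i).mono (Finset.coe_subset.2
      (Finset.subset_biUnion_of_mem E (Finset.mem_range_succ_iff.2 hi)))

end Hierarchy

section PartialHopset

variable {V : Type*} {w : V → V → ℝ≥0∞} {H : Set (V × V)} {A B : Set V} {S c L : ℝ≥0∞}

/-- `H` is a hopset of hop bound `h` and stretch `S` up to the set `A`: a walk from `u` that is
meant to reach `v` within `h` hops at stretch `S` may instead, at the same cost, end in `A`.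
For `A = ∅` this is the upper bound of `IsHopset`. -/
def IsPartialHopset (w : V → V → ℝ≥0∞) (H : Set (V × V)) (A : Set V) (h : ℕ) (S : ℝ≥0∞) : Prop :=
  ∀ u v, hopDist (addShortcuts w H) h u v ≤ S * gdist w u v ∨
    ∃ x ∈ A, hopDist (addShortcuts w H) h u x ≤ S * gdist w u v

theorem CoversLevel.isPartialHopset (hB : CoversLevel (gdist w) H Set.univ B) :
    IsPartialHopset w H B 1 1 := by
  intro u v
  simp only [one_mul]
  rcases hB u trivial v trivial with huv | ⟨p, hp, hup, hle⟩
  · exact Or.inl ((hopDist_one_le _ u v).trans (addShortcuts_le_gdist huv))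
  · exact Or.inr ⟨p, hp, (hopDist_one_le _ u p).trans ((addShortcuts_le_gdist hup).trans hle)⟩

theorem CoversLevel.hopDist_detour (hw : ∀ u v, w u v = w v u)
    (hAB : CoversLevel (gdist w) H A B) {h : ℕ} {p q x y : V} (hx : x ∈ A) (hy : y ∈ A)
    (hpx : hopDist (addShortcuts w H) h p x ≤ c) (hqy : hopDist (addShortcuts w H) h q y ≤ c) :
    hopDist (addShortcuts w H) (2 * h + 1) p q ≤ gdist w p q + 4 * c ∨
      ∃ b ∈ B, hopDist (addShortcuts w H) (2 * h + 1) p b ≤ gdist w p q + 4 * c := by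
  have hxy : gdist w x y ≤ gdist w p q + 2 * c := by
    calc gdist w x y ≤ gdist w x p + (gdist w p q + gdist w q y) :=
          (gdist_triangle w x p y).trans (by gcongr; exact gdist_triangle w p q y)
      _ ≤ c + (gdist w p q + c) := by
          gcongr
          · exact gdist_comm hw x p ▸ (gdist_le_hopDist_addShortcuts w H h p x).trans hpx
          · exact (gdist_le_hopDist_addShortcuts w H h q y).trans hqy
      _ = gdist w p q + 2 * c := by ring
  have hshortcut {b : V} (hxb : (x, b) ∈ H) (hle : gdist w x b ≤ gdist w x y) :
      hopDist (addShortcuts w H) (h + 1) p b ≤ gdist w p q + 3 * c := by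
    calc hopDist (addShortcuts w H) (h + 1) p b
        ≤ hopDist (addShortcuts w H) h p x + hopDist (addShortcuts w H) 1 x b :=
          hopDist_add_le _ h 1 p x b
      _ ≤ c + (gdist w p q + 2 * c) := by
          gcongr
          exact (hopDist_one_le _ x b).trans ((addShortcuts_le_gdist hxb).trans (hle.trans hxy))
      _ = gdist w p q + 3 * c := by ring
  rcases hAB x hx y hy with hxyH | ⟨b, hb, hxb, hle⟩
  · left
    rw [hopDist_comm (addShortcuts_comm hw H) h q y] at hqy
    calc hopDist (addShortcuts w H) (2 * h + 1) p q
        = hopDist (addShortcuts w H) (h + 1 + h) p q := by congr 1; ring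
      _ ≤ gdist w p q + 3 * c + c :=
          (hopDist_add_le _ (h + 1) h p y q).trans (add_le_add (hshortcut hxyH le_rfl) hqy)
      _ = gdist w p q + 4 * c := by ring
  · refine Or.inr ⟨b, hb, (hopDist_antitone _ p b (by omega : h + 1 ≤ 2 * h + 1)).trans ?_⟩
    refine (hshortcut hxb hle).trans ?_
    gcongr
    norm_num

theorem exists_hopDist_add_le_of_bridged [Finite V] (hS : 1 ≤ S) {h : ℕ} {z v : V}
    (hbridge : ∀ y, gdist w z y ≤ L → hopDist (addShortcuts w H) h z y ≤ S * gdist w z y)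
    (hL : L < gdist w z v) :
    ∃ z', L + gdist w z' v ≤ gdist w z v ∧
      hopDist (addShortcuts w H) (h + 1) z z' + S * gdist w z' v ≤ S * gdist w z v := by
  obtain ⟨y, z', hy, hz', hcross⟩ := exists_crossing_edge w hL
  refine ⟨z', le_trans ?_ hcross, ?_⟩
  · gcongr
    exact hz'.le.trans ((gdist_triangle w z y z').trans (by gcongr; exact gdist_le_weight w y z'))
  · calc hopDist (addShortcuts w H) (h + 1) z z' + S * gdist w z' v
        ≤ S * gdist w z y + S * w y z' + S * gdist w z' v := by
          gcongr
          exact (hopDist_add_le _ h 1 z y z').trans (add_le_add (hbridge y hy)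
            ((hopDist_one_le _ y z').trans ((addShortcuts_le_weight w H y z').trans
              (le_mul_of_one_le_left zero_le hS))))
      _ = S * (gdist w z y + w y z' + gdist w z' v) := by ring
      _ ≤ S * gdist w z v := by gcongr

-- Cut the shortest path greedily into pieces of length at most `L` separated by single edges; `p`
-- is the start of the first piece which `H` does not bridge.
theorem IsPartialHopset.hopDist_le_or_exists_stuck [Finite V] {h : ℕ}
    (hH : IsPartialHopset w H A h S) (hS : 1 ≤ S) (hL : L ≠ ⊤) (v : V) (t : ℕ) (z : V)
    (hzv : gdist w z v ≤ (t + 1) * L) :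
    hopDist (addShortcuts w H) ((t + 1) * h + t) z v ≤ S * gdist w z v ∨
      ∃ j m p, j + m = t ∧ gdist w p v ≤ (m + 1) * L ∧
        hopDist (addShortcuts w H) (j * (h + 1)) z p + S * gdist w p v ≤ S * gdist w z v ∧
        ∃ x ∈ A, hopDist (addShortcuts w H) h p x ≤ S * L := by
  induction t using Nat.strong_induction_on generalizing z with
  | _ t ih =>
  by_cases hstuck : ∃ x ∈ A, hopDist (addShortcuts w H) h z x ≤ S * L
  · exact Or.inr ⟨0, t, z, zero_add t, hzv, by simp [hopDist_zero_self], hstuck⟩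
  have hbridge (y : V) (hy : gdist w z y ≤ L) :
      hopDist (addShortcuts w H) h z y ≤ S * gdist w z y :=
    (hH z y).resolve_right fun ⟨x, hx, hzx⟩ => hstuck ⟨x, hx, hzx.trans (by gcongr)⟩
  rcases le_or_gt (gdist w z v) L with hvL | hvL
  · have hhops : h ≤ (t + 1) * h + t := by nlinarith [Nat.zero_le (t * h)]
    exact Or.inl ((hopDist_antitone _ z v hhops).trans (hbridge v hvL))
  obtain ⟨t, rfl⟩ : ∃ s, t = s + 1 := Nat.exists_eq_succ_of_ne_zero fun ht =>
    hvL.not_ge (by simpa [ht] using hzv)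
  obtain ⟨z', hz', hzz'⟩ := exists_hopDist_add_le_of_bridged hS hbridge hvL
  have hz'v : gdist w z' v ≤ (t + 1) * L := by
    refine (ENNReal.add_le_add_iff_left hL).1 ((hz'.trans hzv).trans_eq ?_)
    push_cast
    ring
  rcases ih t t.lt_succ_self z' hz'v with hle | ⟨j, m, p, rfl, hpv, hz'p, hp⟩
  · left
    calc hopDist (addShortcuts w H) ((t + 1 + 1) * h + (t + 1)) z v
        = hopDist (addShortcuts w H) ((h + 1) + ((t + 1) * h + t)) z v := by congr 1; ring
      _ ≤ hopDist (addShortcuts w H) (h + 1) z z' + S * gdist w z' v :=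
          (hopDist_add_le _ _ _ z z' v).trans (by gcongr)
      _ ≤ S * gdist w z v := hzz'
  · refine Or.inr ⟨j + 1, m, p, by ring, hpv, ?_, hp⟩
    calc hopDist (addShortcuts w H) ((j + 1) * (h + 1)) z p + S * gdist w p v
        ≤ hopDist (addShortcuts w H) (h + 1) z z' +
            (hopDist (addShortcuts w H) (j * (h + 1)) z' p + S * gdist w p v) := by
          rw [← add_assoc, add_mul, one_mul, add_comm (j * _)]
          gcongr
          exact hopDist_add_le _ _ _ z z' p
      _ ≤ hopDist (addShortcuts w H) (h + 1) z z' + S * gdist w z' v := by gcongr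
      _ ≤ S * gdist w z v := hzz'

theorem CoversLevel.hopDist_le_add_or_exists (hw : ∀ u v, w u v = w v u) (hS : 1 ≤ S)
    (hAB : CoversLevel (gdist w) H A B) {a b h : ℕ} {u v p q x y : V} (hx : x ∈ A) (hy : y ∈ A)
    (hpx : hopDist (addShortcuts w H) h p x ≤ c) (hqy : hopDist (addShortcuts w H) h q y ≤ c)
    (hup : hopDist (addShortcuts w H) a u p + S * gdist w p v ≤ S * gdist w u v)
    (hqv : hopDist (addShortcuts w H) b q v + S * gdist w p q ≤ S * gdist w p v) :
    hopDist (addShortcuts w H) (a + (2 * h + 1) + b) u v ≤ S * gdist w u v + 4 * c ∨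
      ∃ z ∈ B, hopDist (addShortcuts w H) (a + (2 * h + 1) + b) u z ≤ S * gdist w u v + 4 * c := by
  have hcost : hopDist (addShortcuts w H) a u p + (gdist w p q + 4 * c) +
      hopDist (addShortcuts w H) b q v ≤ S * gdist w u v + 4 * c := by
    calc hopDist (addShortcuts w H) a u p + (gdist w p q + 4 * c) +
          hopDist (addShortcuts w H) b q v
        ≤ hopDist (addShortcuts w H) a u p + (S * gdist w p q + 4 * c) +
          hopDist (addShortcuts w H) b q v := by
          gcongr
          exact le_mul_of_one_le_left zero_le hS
      _ = hopDist (addShortcuts w H) a u p +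
          (hopDist (addShortcuts w H) b q v + S * gdist w p q) + 4 * c := by ring
      _ ≤ S * gdist w u v + 4 * c := by
          gcongr
          exact le_trans (by gcongr) hup
  have hdetour {z : V} (hpz : hopDist (addShortcuts w H) (2 * h + 1) p z ≤ gdist w p q + 4 * c) :
      hopDist (addShortcuts w H) (a + (2 * h + 1)) u z ≤
        hopDist (addShortcuts w H) a u p + (gdist w p q + 4 * c) :=
    (hopDist_add_le _ _ _ u p z).trans (by gcongr)
  refine (hAB.hopDist_detour hw hx hy hpx hqy).imp (fun hpq => ?_) fun ⟨z, hz, hpz⟩ => ⟨z, hz, ?_⟩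
  · exact (hopDist_add_le _ _ _ u q v).trans ((add_le_add_left (hdetour hpq) _).trans hcost)
  · exact (hopDist_antitone _ u z (Nat.le_add_right _ b)).trans
      ((hdetour hpz).trans (le_self_add.trans hcost))

-- March from `u` until stuck at `p`, then from `v` towards `p` until stuck at `q`, and cross the
-- gap between `p` and `q` by a detour through `A`.
theorem IsPartialHopset.hopDist_le_add_or_exists [Finite V] (hw : ∀ u v, w u v = w v u) {h : ℕ}
    (hH : IsPartialHopset w H A h S) (hS : 1 ≤ S) (hAB : CoversLevel (gdist w) H A B)
    (hL : L ≠ ⊤) {t : ℕ} {u v : V} (huv : gdist w u v ≤ (t + 1) * L) :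
    hopDist (addShortcuts w H) ((t + 2) * h + (t + 1)) u v ≤ S * gdist w u v + 4 * (S * L) ∨
      ∃ b ∈ B, hopDist (addShortcuts w H) ((t + 2) * h + (t + 1)) u b ≤
        S * gdist w u v + 4 * (S * L) := by
  have hcomm := hopDist_comm (addShortcuts_comm hw H)
  rcases hH.hopDist_le_or_exists_stuck hS hL v t u huv with
    hle | ⟨j, m, p, rfl, hpv, hup, x, hx, hpx⟩
  · exact Or.inl ((hopDist_antitone _ u v (by nlinarith)).trans (hle.trans le_self_add))
  rw [gdist_comm hw] at hpv
  rcases hH.hopDist_le_or_exists_stuck hS hL p m v hpv with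
    hle | ⟨i, m, q, rfl, -, hvq, y, hy, hqy⟩
  · left
    rw [hcomm, gdist_comm hw] at hle
    calc hopDist (addShortcuts w H) ((j + m + 2) * h + (j + m + 1)) u v
        ≤ hopDist (addShortcuts w H) (j * (h + 1) + ((m + 1) * h + m)) u v :=
          hopDist_antitone _ u v (by nlinarith)
      _ ≤ hopDist (addShortcuts w H) (j * (h + 1)) u p + S * gdist w p v :=
          (hopDist_add_le _ _ _ u p v).trans (by gcongr)
      _ ≤ S * gdist w u v + 4 * (S * L) := hup.trans le_self_add
  rw [hcomm, gdist_comm hw q p, gdist_comm hw v p] at hvq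
  have hhops : j * (h + 1) + (2 * h + 1) + i * (h + 1) ≤
      (j + (i + m) + 2) * h + (j + (i + m) + 1) := by
    nlinarith [Nat.zero_le (m * h)]
  exact (hAB.hopDist_le_add_or_exists hw hS hx hy hpx hqy hup hvq).imp
    (hopDist_antitone _ u v hhops).trans fun ⟨b, hb, hub⟩ =>
      ⟨b, hb, (hopDist_antitone _ u b hhops).trans hub⟩

theorem IsPartialHopset.succ [Finite V] (hw : ∀ u v, w u v = w v u) {h r : ℕ} (hr : r ≠ 0)
    (hH : IsPartialHopset w H A h S) (hS : 1 ≤ S) (hAB : CoversLevel (gdist w) H A B) :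
    IsPartialHopset w H B ((r + 1) * h + r) (S * (1 + 4 / (r : ℝ≥0∞))) := by
  intro u v
  rcases eq_or_ne (gdist w u v) ⊤ with htop | htop
  · left
    rw [htop, ENNReal.mul_top (mul_ne_zero (zero_lt_one.trans_le hS).ne' (by simp))]
    exact le_top
  obtain ⟨t, rfl⟩ := Nat.exists_eq_succ_of_ne_zero hr
  have hr' : ((t + 1 : ℕ) : ℝ≥0∞) ≠ 0 := Nat.cast_ne_zero.2 hr
  have hlength : gdist w u v ≤ (t + 1) * (gdist w u v / (t + 1 : ℕ)) := by
    rw [← Nat.cast_succ, ENNReal.mul_div_cancel hr' (ENNReal.natCast_ne_top _)]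
  have hcost : S * (1 + 4 / ((t + 1 : ℕ) : ℝ≥0∞)) * gdist w u v =
      S * gdist w u v + 4 * (S * (gdist w u v / (t + 1 : ℕ))) := by
    simp only [div_eq_mul_inv]
    ring
  rw [hcost]
  exact hH.hopDist_le_add_or_exists hw hS hAB (ENNReal.div_ne_top htop hr') hlength

theorem isPartialHopset_of_coversLevel [Finite V] (hw : ∀ u v, w u v = w v u) {A : ℕ → Set V}
    (hA0 : A 0 = Set.univ) {k r : ℕ} (hr : k ≠ 0 → r ≠ 0)
    (hA : ∀ i ≤ k, CoversLevel (gdist w) H (A i) (A (i + 1))) :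
    IsPartialHopset w H (A (k + 1)) (2 * (r + 1) ^ k - 1) ((1 + 4 / (r : ℝ≥0∞)) ^ k) := by
  induction k with
  | zero =>
    simp only [pow_zero]
    exact (hA0 ▸ hA 0 le_rfl).isPartialHopset
  | succ k ih =>
    have hr0 := hr k.succ_ne_zero
    have hprev := ih (fun _ => hr0) fun i hi => hA i (hi.trans k.le_succ)
    have hhops : (r + 1) * (2 * (r + 1) ^ k - 1) + r = 2 * (r + 1) ^ (k + 1) - 1 := by
      obtain ⟨h, hh⟩ : ∃ h, 2 * (r + 1) ^ k = h + 1 :=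
        Nat.exists_eq_succ_of_ne_zero (by positivity)
      have : 2 * (r + 1) ^ (k + 1) = (r + 1) * h + r + 1 := by
        rw [pow_succ, ← mul_assoc, hh]
        ring
      rw [this, hh, Nat.add_sub_cancel, Nat.add_sub_cancel]
    rw [← hhops, pow_succ]
    exact hprev.succ hw hr0 (one_le_pow₀ le_self_add) (hA (k + 1) le_rfl)

theorem IsPartialHopset.isHopset {h β : ℕ} {ε : ℝ} (hH : IsPartialHopset w H ∅ h S) (hβ : h ≤ β)
    (hε : S ≤ ENNReal.ofReal (1 + ε)) : IsHopset w H β ε := by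
  refine fun u v => ⟨gdist_le_hopDist_addShortcuts w H β u v, ?_⟩
  have huv := (hH u v).resolve_right fun ⟨_, hx, _⟩ => hx
  exact (hopDist_antitone _ u v hβ).trans (huv.trans (by gcongr))

end PartialHopset

section Parameters

theorem one_add_div_pow_le {c r y : ℝ} (hc : 0 ≤ c) (hr : 0 < r) (hy : 1 < y) {k : ℕ}
    (h : c * k / Real.log y ≤ r) : (1 + c / r) ^ k ≤ y := by
  calc (1 + c / r) ^ k ≤ Real.exp (c / r) ^ k := by
        gcongr
        exact (add_comm 1 (c / r)).trans_le (Real.add_one_le_exp _)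
    _ = Real.exp (k * (c / r)) := (Real.exp_nat_mul _ _).symm
    _ ≤ Real.exp (Real.log y) := by
        gcongr
        rw [div_le_iff₀ (Real.log_pos hy)] at h
        rw [← mul_div_assoc, div_le_iff₀ hr]
        linarith
    _ = y := Real.exp_log (zero_lt_one.trans hy)

theorem one_add_four_div_pow_le_ofReal {k r : ℕ} {ε : ℝ} (hε : 0 < ε) (hr : k ≠ 0 → r ≠ 0)
    (h : 4 * (k : ℝ) / Real.log (1 + ε) ≤ r) :
    (1 + 4 / (r : ℝ≥0∞)) ^ k ≤ ENNReal.ofReal (1 + ε) := by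
  rcases eq_or_ne k 0 with rfl | hk
  · rw [pow_zero, ENNReal.one_le_ofReal]
    linarith
  have hr' : (0 : ℝ) < r := Nat.cast_pos.2 (Nat.pos_of_ne_zero (hr hk))
  have hreal : 1 + 4 / (r : ℝ≥0∞) = ENNReal.ofReal (1 + 4 / r) := by
    rw [ENNReal.ofReal_add zero_le_one (by positivity), ENNReal.ofReal_div_of_pos hr']
    simp
  rw [hreal, ← ENNReal.ofReal_pow (by positivity)]
  exact ENNReal.ofReal_le_ofReal (one_add_div_pow_le zero_le_four hr' (by linarith) h)

theorem le_two_pow_two_pow_ceil_logb_logb (n : ℕ) :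
    n ≤ 2 ^ 2 ^ ⌈Real.logb 2 (Real.logb 2 n)⌉₊ := by
  rcases lt_or_ge n 2 with hn | hn
  · exact (Nat.le_of_lt_succ hn).trans Nat.one_le_two_pow
  have hn' : (1 : ℝ) < n := by exact_mod_cast hn
  have hlog : Real.logb 2 n ≤ (2 ^ ⌈Real.logb 2 (Real.logb 2 n)⌉₊ : ℕ) := by
    rw [Nat.cast_pow, Nat.cast_ofNat, ← Real.rpow_natCast,
      ← Real.logb_le_iff_le_rpow one_lt_two (Real.logb_pos one_lt_two hn')]
    exact Nat.le_ceil _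
  rw [Real.logb_le_iff_le_rpow one_lt_two (zero_lt_one.trans hn'), Real.rpow_natCast] at hlog
  exact_mod_cast hlog

end Parameters

theorem linear_size_hopset_exists_general {V : Type*} [Fintype V] {w : V → V → ℝ≥0∞}
    (hw : ∀ u v, w u v = w v u) {k : ℕ} (hk : Fintype.card V ≤ 2 ^ 2 ^ k) :
    ∃ H : Finset (V × V), H.card ≤ 10 * Fintype.card V ∧ ∀ ε : ℝ, 0 < ε →
      IsHopset w (H : Set (V × V)) (2 * (⌈4 * (k : ℝ) / Real.log (1 + ε)⌉₊ + 1) ^ k) ε := by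
  obtain ⟨A, H, hA0, hAk, hcard, hA⟩ := exists_hierarchy_coversLevel (gdist w) Finset.univ hk
  refine ⟨H, hcard, fun ε hε => ?_⟩
  have hr (hk0 : k ≠ 0) : ⌈4 * (k : ℝ) / Real.log (1 + ε)⌉₊ ≠ 0 := by
    have := Real.log_pos (by linarith : 1 < 1 + ε)
    exact (Nat.ceil_pos.2 (by positivity)).ne'
  have hH := isPartialHopset_of_coversLevel hw (A := fun i => A i) (by simp [hA0]) hr hA
  simp only [hAk, Finset.coe_empty] at hH
  exact hH.isHopset (Nat.sub_le _ 1) (one_add_four_div_pow_le_ofReal hε hr (Nat.le_ceil _))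

/-- There is an absolute constant `C` such that every weighted
undirected graph with positive edge weights on `n` vertices admits, for every `ε > 0`,
a `(β, ε)`-hopset of size at most `C · n`, where `β = 2(r+1)^k` with
`k = ⌈log₂ log₂ n⌉` and `r = ⌈4k / ln(1+ε)⌉`. -/
theorem linear_size_hopset_exists :
    ∃ C : ℝ, 0 < C ∧
      ∀ (V : Type) [Fintype V] (w : V → V → ℝ≥0∞),
        (∀ u v : V, w u v = w v u) → (∀ u v : V, 0 < w u v) →
        ∀ ε : ℝ, 0 < ε →
          ∃ H : Finset (V × V),
            (H.card : ℝ) ≤ C * (Fintype.card V : ℝ) ∧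
            IsHopset w (↑H : Set (V × V))
              (2 * (⌈(4 * ((⌈Real.logb 2 (Real.logb 2 (Fintype.card V))⌉₊ : ℕ) : ℝ)) /
                      Real.log (1 + ε)⌉₊ + 1) ^
                  (⌈Real.logb 2 (Real.logb 2 (Fintype.card V))⌉₊ : ℕ)) ε :=
  ⟨10, by norm_num, fun _ _ w hw _ ε hε =>
    let ⟨H, hcard, hH⟩ := linear_size_hopset_exists_general hw (le_two_pow_two_pow_ceil_logb_logb _)
    ⟨H, by exact_mod_cast hcard, hH ε hε⟩⟩
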